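/- For every integer K ≥ 3 and every integer T with T > 36·log(K) there exists a fixed-budget strategy π with horizon T (the PD-MTB algorithm) such that for every σ > 0 and every σ²-sub-Gaussian K-armed bandit problem ν whose means (μ_k)_{k=1}^K satisfy the relaxed monotonicity condition — there exists k₀ ∈ {0, 1, …, K} with μ_j ≤ τ for all j ≤ k₀ and μ_j ≥ τ for all j ≥ k₀ + 1 — the probability of error satisfies e_T^{ν,π} ≤ exp(−(1/48)·T·Δ_min²/σ² + 12·log(K)), where Δ_min = min_{k∈[K]} |μ_k − τ|. -/

import Mathlib

open MeasureTheory

/-- Law of the history `(Y_1, …, Y_n)` of a fixed-budget strategy: at round `t + 1`, given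
the past history `h : Fin t → ℝ`, the sampling rule `π` selects the arm `π t h` and the
observation is drawn from `ν (π t h)` (sequential / Ionescu–Tulcea composition). -/
noncomputable def histMeasure {K : ℕ} (ν : Fin K → Measure ℝ)
    (π : (t : ℕ) → (Fin t → ℝ) → Fin K) : (n : ℕ) → Measure (Fin n → ℝ)
  | 0 => Measure.dirac (fun i => Fin.elim0 i)
  | n + 1 => (histMeasure ν π n).bind (fun h => (ν (π n h)).map (Fin.snoc h))

/-- The error event: some arm is misclassified. `Qhat y k = true` encodes the label `+1`
(i.e. the prediction that `μ k ≥ τ`), `false` encodes the label `-1`. -/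
def errSet {K T : ℕ} (Qhat : (Fin T → ℝ) → Fin K → Bool) (μ : Fin K → ℝ) (τ : ℝ) :
    Set (Fin T → ℝ) :=
  {y | ∃ k, (Qhat y k = true) ≠ (τ ≤ μ k)}

/-- A distribution `ν` with mean `m` is `σ2`-sub-Gaussian if
`∫ exp (t (x − m)) dν(x) ≤ exp (σ2 t² / 2)` for all `t : ℝ`. -/
def IsSubGaussianArm (σ2 : ℝ) (m : ℝ) (ν : Measure ℝ) : Prop :=
  ∀ t : ℝ, ∫⁻ x, ENNReal.ofReal (Real.exp (t * (x - m))) ∂ν ≤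
    ENNReal.ofReal (Real.exp (σ2 * t ^ 2 / 2))

/-- The relaxed monotonicity condition (Remark 2): there is a (1-based) index
`k₀ ∈ {0, …, K}` with `μ_j ≤ τ` for all `j ≤ k₀` and `μ_j ≥ τ` for all `j ≥ k₀ + 1`
(stated here with 0-based indices `j : Fin K`, arm `j` being the (j+1)-st arm). -/
def RelaxedMonotone {K : ℕ} (μ : Fin K → ℝ) (τ : ℝ) : Prop :=
  ∃ k0 : ℕ, k0 ≤ K ∧ ∀ j : Fin K, ((j : ℕ) < k0 → μ j ≤ τ) ∧ (k0 ≤ (j : ℕ) → τ ≤ μ j)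

/-! The strategy is a noisy binary search over the `K + 1` hypotheses that exactly the first `h`
arms are below `τ`. In each of `N ≈ 8 log K` rounds it asks on which side of `τ` the two arms
adjacent to a weighted median of the hypotheses lie, takes the sign of a batch sum of
`m = T / (2 N)` observations as an answer, and divides the weight of a hypothesis by `3` for each
answer that contradicts it. Two correct answers refute at least half of the weight of the false
hypotheses, because everything on one side of the median and the median itself goes, unless the
median is the truth and everything else goes. A wrong answer divides the weight of the truth by `3`
and is paid for by discounting the weight of the false hypotheses accordingly. This potential
therefore contracts by `2 / 3` in every round, and the final median can be false only if at least
`N / 6` answers are wrong. With `δ = Δ_min² / (2 σ²)`, the sub-Gaussian bound makes each answer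
wrong with conditional probability at most `exp (-m δ)`, so `exp (m δ)` to the number of wrong
answers has mean at most `2 ^ (2 N)`, and Markov's inequality bounds the error by
`2 ^ (2 N) * exp (-m δ N / 6)`. -/

open Finset
open scoped ENNReal

/-! ### Histories of adaptive strategies -/

section History

variable {K : ℕ} {ν : Fin K → Measure ℝ}

lemma measurable_snoc {β : Type*} [MeasurableSpace β] (n : ℕ) :
    Measurable fun p : (Fin n → β) × β ↦ Fin.snoc (α := fun _ ↦ β) p.1 p.2 := by
  refine measurable_pi_lambda _ (Fin.lastCases ?_ fun i ↦ ?_)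
  · simpa only [Fin.snoc_last] using measurable_snd
  · simp only [Fin.snoc_castSucc]
    fun_prop

lemma measurable_map_snoc [∀ k, SFinite (ν k)] {n : ℕ} {a : (Fin n → ℝ) → Fin K}
    (ha : Measurable a) :
    Measurable fun h ↦ (ν (a h)).map (Fin.snoc (α := fun _ ↦ ℝ) h) := by
  have hfixed : Measurable fun p : Fin K × (Fin n → ℝ) ↦
      (ν p.1).map (Fin.snoc (α := fun _ ↦ ℝ) p.2) := by
    refine measurable_from_prod_countable_right fun k ↦ ?_
    have hmap (h : Fin n → ℝ) : (ν k).map (Fin.snoc (α := fun _ ↦ ℝ) h)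
        = ((ν k).map (Prod.mk h)).map fun p ↦ Fin.snoc (α := fun _ ↦ ℝ) p.1 p.2 :=
      (Measure.map_map (measurable_snoc n) measurable_prodMk_left).symm
    simp only [hmap]
    exact (Measure.measurable_map _ (measurable_snoc n)).comp Measurable.map_prodMk_left
  exact hfixed.comp (ha.prodMk measurable_id)

lemma isProbabilityMeasure_histMeasure [∀ k, IsProbabilityMeasure (ν k)]
    {π : (t : ℕ) → (Fin t → ℝ) → Fin K} (hπ : ∀ t, Measurable (π t)) (n : ℕ) :
    IsProbabilityMeasure (histMeasure ν π n) := by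
  induction n with
  | zero => exact Measure.dirac.isProbabilityMeasure
  | succ n ih =>
    refine isProbabilityMeasure_bind (measurable_map_snoc (hπ n)).aemeasurable
      (.of_forall fun h ↦ Measure.isProbabilityMeasure_map ?_)
    exact ((measurable_snoc n).comp measurable_prodMk_left).aemeasurable

end History

section StateMachine

variable {α β : Type*}

/-- The state reached from `x₀` by an automaton with transition function `step` after reading
the observations `h` in order. -/
def stateAfter (step : α → β → α) (x₀ : α) (n : ℕ) (h : Fin n → β) : α :=
  Fin.foldl n (fun x i ↦ step x (h i)) x₀

lemma stateAfter_succ (step : α → β → α) (x₀ : α) (n : ℕ) (h : Fin (n + 1) → β) :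
    stateAfter step x₀ (n + 1) h = step (stateAfter step x₀ n (Fin.init h)) (h (Fin.last n)) :=
  Fin.foldl_succ_last ..

variable [MeasurableSpace α]

lemma measurable_stateAfter [MeasurableSpace β] {step : α → β → α}
    (hstep : Measurable (Function.uncurry step)) (x₀ : α) (n : ℕ) :
    Measurable (stateAfter step x₀ n) := by
  induction n with
  | zero => exact measurable_const
  | succ n ih =>
    simp only [funext (stateAfter_succ step x₀ n)]
    have hinit : Measurable fun h : Fin (n + 1) → β ↦ (Fin.init h : Fin n → β) :=
      measurable_pi_lambda _ fun i ↦ measurable_pi_apply i.castSucc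
    exact hstep.comp ((ih.comp hinit).prodMk (measurable_pi_apply (Fin.last n)))

lemma lintegral_stateAfter_le {K : ℕ} {ν : Fin K → Measure ℝ} [∀ k, SFinite (ν k)]
    {step : α → ℝ → α} (hstep : Measurable (Function.uncurry step))
    {arm : α → Fin K} (harm : Measurable arm) {V : α → ℝ≥0∞} (hV : Measurable V)
    (hdrift : ∀ x, ∫⁻ y, V (step x y) ∂ν (arm x) ≤ V x) (x₀ : α) (n : ℕ) :
    ∫⁻ h, V (stateAfter step x₀ n h)
      ∂histMeasure ν (fun t h ↦ arm (stateAfter step x₀ t h)) n ≤ V x₀ := by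
  have hstate := measurable_stateAfter hstep x₀
  induction n with
  | zero => exact (lintegral_dirac' _ (hV.comp (hstate 0))).le
  | succ n ih =>
    have hVstate : Measurable fun h ↦ V (stateAfter step x₀ (n + 1) h) :=
      hV.comp (hstate (n + 1))
    refine le_trans ?_ ih
    have hkernel := measurable_map_snoc (ν := ν) (a := fun h ↦ arm (stateAfter step x₀ n h))
      (harm.comp (hstate n))
    rw [histMeasure, Measure.lintegral_bind hkernel.aemeasurable hVstate.aemeasurable]
    refine lintegral_mono fun h ↦ ?_
    have hsnoc : Measurable (Fin.snoc (α := fun _ ↦ ℝ) h) :=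
      (measurable_snoc n).comp measurable_prodMk_left
    rw [lintegral_map hVstate hsnoc]
    simpa only [stateAfter_succ, Fin.init_snoc, Fin.snoc_last]
      using hdrift (stateAfter step x₀ n h)

end StateMachine

/-! ### Threshold queries answered by batches of samples -/

/-- The number of answers in a transcript, listed from the most recent one, that differ from the
truth; `ask l` is the question put after the transcript `l`. -/
def mistakes {ι : Type*} (ask : List Bool → ι) (truth : ι → Bool) : List Bool → ℕ
  | [] => 0
  | b :: l => mistakes ask truth l + if b = truth (ask l) then 0 else 1

/-- The state of a batch sampler: the transcript of the completed batches, and the number and the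
sum of the observations, centred at the threshold, in the current batch. -/
abbrev BatchState := List Bool × ℕ × ℝ

local instance : MeasurableSpace (List Bool) := ⊤

/-- One observation of the batch sampler. A batch of `m` observations yields the answer `true`,
meaning that the sampled arm is below `τ`, when their average is below `τ`. The sampler stops
after `N` answers. -/
noncomputable def batchStep (N m : ℕ) (τ : ℝ) : BatchState → ℝ → BatchState
  | (l, j, S), y =>
    if N ≤ l.length then (l, j, S)
    else if j + 1 < m then (l, j + 1, S + (y - τ))
    else (decide (S + (y - τ) < 0) :: l, 0, 0)

/-- The answers that the batch sampler has collected from the history `h`. -/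
noncomputable def transcript (N m : ℕ) (τ : ℝ) (t : ℕ) (h : Fin t → ℝ) : List Bool :=
  (stateAfter (batchStep N m τ) ([], 0, 0) t h).1

lemma measurable_batchStep (N m : ℕ) (τ : ℝ) :
    Measurable (Function.uncurry (batchStep N m τ)) := by
  have hassoc : Measurable fun p : List Bool × (ℕ × ℝ × ℝ) ↦
      batchStep N m τ (p.1, p.2.1, p.2.2.1) p.2.2.2 := by
    refine measurable_from_prod_countable_right fun l ↦
      measurable_from_prod_countable_right fun j ↦ ?_
    have hneg : MeasurableSet {p : ℝ × ℝ | p.1 + (p.2 - τ) < 0} :=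
      measurableSet_lt (by fun_prop) measurable_const
    have hcons : Measurable fun b : Bool ↦ b :: l := measurable_of_countable _
    simp only [batchStep]
    split_ifs
    · fun_prop
    · fun_prop
    · exact (hcons.comp (measurable_to_bool (by simpa [Set.preimage] using hneg))).prodMk
        measurable_const
  exact hassoc.comp (f := fun p : BatchState × ℝ ↦ (p.1.1, p.1.2.1, p.1.2.2, p.2)) (by fun_prop)

lemma measurable_transcript (N m : ℕ) (τ : ℝ) (t : ℕ) : Measurable (transcript N m τ t) :=
  measurable_fst.comp (measurable_stateAfter (measurable_batchStep N m τ) _ t)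

lemma stateAfter_batchStep_progress {N m : ℕ} (hm : 0 < m) (τ : ℝ) (t : ℕ) (h : Fin t → ℝ) :
    let x := stateAfter (batchStep N m τ) ([], 0, 0) t h
    (x.1.length = N ∧ x.2 = (0, 0)) ∨
      (x.1.length < N ∧ x.2.1 < m ∧ m * x.1.length + x.2.1 = t) := by
  induction t with
  | zero =>
    rcases N.eq_zero_or_pos with rfl | hN
    · exact .inl ⟨rfl, rfl⟩
    · exact .inr ⟨hN, hm, rfl⟩
  | succ t ih =>
    have ih := ih (Fin.init h)
    rw [stateAfter_succ]
    generalize stateAfter (batchStep N m τ) ([], 0, 0) t (Fin.init h) = x at ih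
    obtain ⟨l, j, S⟩ := x
    dsimp only [batchStep] at ih ⊢
    split_ifs with hdone hbatch
    · exact .inl (ih.resolve_right fun hlt ↦ hdone.not_gt hlt.1)
    · exact .inr (by grind)
    · rw [List.length_cons, mul_add]
      grind

lemma stateAfter_batchStep_eq {N m T : ℕ} (hm : 0 < m) (hT : m * N ≤ T) (τ : ℝ)
    (h : Fin T → ℝ) :
    (transcript N m τ T h).length = N ∧
      stateAfter (batchStep N m τ) ([], 0, 0) T h = (transcript N m τ T h, 0, 0) := by
  rcases stateAfter_batchStep_progress (N := N) hm τ T h with ⟨hlen, hzero⟩ | ⟨hlt, hj, htime⟩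
  · exact ⟨hlen, Prod.ext rfl hzero⟩
  · have := Nat.mul_le_mul_left m (Nat.succ_le_of_lt hlt)
    rw [Nat.mul_succ] at this
    omega

lemma IsSubGaussianArm.lintegral_exp_neg_div_mul_sub_le {σ m : ℝ} {ρ : Measure ℝ} (hσ : σ ≠ 0)
    (hρ : IsSubGaussianArm (σ ^ 2) m ρ) (τ : ℝ) :
    ∫⁻ y, ENNReal.ofReal (Real.exp (-((m - τ) / σ ^ 2) * (y - τ))) ∂ρ
      ≤ ENNReal.ofReal (Real.exp (-((m - τ) ^ 2 / (2 * σ ^ 2)))) := by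
  set t := -((m - τ) / σ ^ 2) with ht
  have hcentre (y : ℝ) : ENNReal.ofReal (Real.exp (t * (y - τ)))
      = ENNReal.ofReal (Real.exp (t * (m - τ))) * ENNReal.ofReal (Real.exp (t * (y - m))) := by
    rw [← ENNReal.ofReal_mul (by positivity), ← Real.exp_add]
    ring_nf
  rw [lintegral_congr hcentre, lintegral_const_mul' _ _ ENNReal.ofReal_ne_top]
  refine (mul_le_mul_right (hρ t) _).trans_eq ?_
  rw [← ENNReal.ofReal_mul (by positivity), ← Real.exp_add, ht]
  congr 2
  field_simp
  ring

lemma lintegral_ofReal_add_mul_le {Ω : Type*} [MeasurableSpace Ω] {P : Measure Ω}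
    [IsProbabilityMeasure P] {f : Ω → ℝ} {a b r : ℝ} (ha : 0 ≤ a) (hb : 0 ≤ b) (hr : 0 ≤ r)
    (hf : ∫⁻ ω, ENNReal.ofReal (f ω) ∂P ≤ ENNReal.ofReal r) :
    ∫⁻ ω, ENNReal.ofReal (a + b * f ω) ∂P ≤ ENNReal.ofReal (a + b * r) :=
  calc ∫⁻ ω, ENNReal.ofReal (a + b * f ω) ∂P
      ≤ ∫⁻ ω, ENNReal.ofReal a + ENNReal.ofReal b * ENNReal.ofReal (f ω) ∂P :=
        lintegral_mono fun ω ↦ by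
          rw [← ENNReal.ofReal_mul hb]
          exact ENNReal.ofReal_add_le
    _ = ENNReal.ofReal a + ENNReal.ofReal b * ∫⁻ ω, ENNReal.ofReal (f ω) ∂P := by
        rw [lintegral_add_left measurable_const, lintegral_const_mul' _ _ ENNReal.ofReal_ne_top,
          lintegral_const, measure_univ, mul_one]
    _ ≤ ENNReal.ofReal a + ENNReal.ofReal b * ENNReal.ofReal r := by gcongr
    _ = ENNReal.ofReal (a + b * r) := by
        rw [← ENNReal.ofReal_mul hb, ← ENNReal.ofReal_add ha (mul_nonneg hb hr)]

section Potential

variable {K : ℕ} {ask : List Bool → Fin K} {θ : Fin K → ℝ} {δ : ℝ} {m : ℕ}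

/-- The supermartingale that controls the number of mistakes of the batch sampler when
`exp (-θ k * (y - τ))` has mean at most `exp (-δ)` under arm `k`. The last factor is an upper
bound for the conditional mean of `exp (m * δ)` raised to the number of mistakes, `0` or `1`, in the
current batch; it equals `2` at the start of a batch, which the powers of `1 / 2` compensate. -/
noncomputable def batchPotential (ask : List Bool → Fin K) (θ : Fin K → ℝ) (δ : ℝ) (m : ℕ) :
    BatchState → ℝ
  | (l, j, S) => (1 / 2) ^ (l.length + 1)
      * Real.exp (m * δ * mistakes ask (fun k ↦ decide (θ k < 0)) l)
      * (1 + Real.exp (δ * j - θ (ask l) * S))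

lemma measurable_batchPotential : Measurable (batchPotential ask θ δ m) := by
  refine measurable_from_prod_countable_right fun l ↦
    measurable_from_prod_countable_right fun j ↦ ?_
  simp only [batchPotential]
  fun_prop

lemma batchPotential_batchStep_le (hδ : 0 ≤ δ) {N : ℕ} (τ : ℝ) {l : List Bool}
    (hl : l.length < N) (j : ℕ) (S y : ℝ) :
    batchPotential ask θ δ m (batchStep N m τ (l, j, S) y) ≤
      (1 / 2) ^ (l.length + 1)
        * Real.exp (m * δ * mistakes ask (fun k ↦ decide (θ k < 0)) l)
        * (1 + Real.exp (δ * (j + 1) - θ (ask l) * (S + (y - τ)))) := by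
  rw [batchStep, if_neg hl.not_ge]
  split_ifs with hj
  · simp [batchPotential]
  have hmj : (m : ℝ) * δ ≤ δ * (j + 1) := by
    rw [mul_comm]
    exact mul_le_mul_of_nonneg_left (by exact_mod_cast not_lt.1 hj) hδ
  set S' := S + (y - τ)
  set M := mistakes ask (fun k ↦ decide (θ k < 0)) l
  have hanswer : Real.exp (m * δ * (if decide (S' < 0) = decide (θ (ask l) < 0) then 0 else 1))
      ≤ 1 + Real.exp (δ * (j + 1) - θ (ask l) * S') := by
    split_ifs with hcorrect
    · simpa using (Real.exp_pos _).le
    · have hsign : θ (ask l) * S' ≤ 0 := by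
        rw [decide_eq_decide] at hcorrect
        by_cases hS : S' < 0
        · exact mul_nonpos_of_nonneg_of_nonpos (by grind) hS.le
        · exact mul_nonpos_of_nonpos_of_nonneg (by grind) (not_lt.1 hS)
      rw [mul_one]
      have := Real.exp_le_exp.2 (show m * δ ≤ δ * (j + 1) - θ (ask l) * S' by linarith)
      linarith
  calc batchPotential ask θ δ m (decide (S' < 0) :: l, 0, 0)
      = (1 / 2) ^ (l.length + 1) * Real.exp (m * δ * M)
        * Real.exp (m * δ * (if decide (S' < 0) = decide (θ (ask l) < 0) then 0 else 1)) := by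
        simp only [batchPotential, mistakes, List.length_cons, Nat.cast_add, Nat.cast_ite,
          Nat.cast_zero, Nat.cast_one, mul_zero, sub_zero, Real.exp_zero, mul_add, Real.exp_add, M]
        ring
    _ ≤ _ := by gcongr

variable {ν : Fin K → Measure ℝ} [∀ k, IsProbabilityMeasure (ν k)] {τ : ℝ}

lemma lintegral_batchPotential_batchStep_le (hδ : 0 ≤ δ)
    (hν : ∀ k, ∫⁻ y, ENNReal.ofReal (Real.exp (-θ k * (y - τ))) ∂ν k
      ≤ ENNReal.ofReal (Real.exp (-δ))) (N : ℕ) (x : BatchState) :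
    ∫⁻ y, ENNReal.ofReal (batchPotential ask θ δ m (batchStep N m τ x y)) ∂ν (ask x.1)
      ≤ ENNReal.ofReal (batchPotential ask θ δ m x) := by
  obtain ⟨l, j, S⟩ := x
  rcases le_or_gt N l.length with hdone | hl
  · simp [batchStep, hdone]
  set A := (1 / 2) ^ (l.length + 1)
    * Real.exp (m * δ * mistakes ask (fun k ↦ decide (θ k < 0)) l) with hA
  set B := A * Real.exp (δ * (j + 1) - θ (ask l) * S) with hB
  calc ∫⁻ y, ENNReal.ofReal (batchPotential ask θ δ m (batchStep N m τ (l, j, S) y)) ∂ν (ask l)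
      ≤ ∫⁻ y, ENNReal.ofReal (A + B * Real.exp (-θ (ask l) * (y - τ))) ∂ν (ask l) := by
        refine lintegral_mono fun y ↦ ENNReal.ofReal_le_ofReal
          ((batchPotential_batchStep_le hδ τ hl j S y).trans_eq ?_)
        rw [← hA, hB, mul_assoc A, ← Real.exp_add, mul_add, mul_one]
        ring_nf
    _ ≤ ENNReal.ofReal (A + B * Real.exp (-δ)) :=
        lintegral_ofReal_add_mul_le (by positivity) (by positivity) (by positivity) (hν _)
    _ = ENNReal.ofReal (batchPotential ask θ δ m (l, j, S)) := by
        rw [batchPotential, ← hA, hB, mul_assoc A, ← Real.exp_add, mul_add, mul_one]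
        ring_nf

theorem histMeasure_mistakes_ge_le (hδ : 0 ≤ δ)
    (hν : ∀ k, ∫⁻ y, ENNReal.ofReal (Real.exp (-θ k * (y - τ))) ∂ν k
      ≤ ENNReal.ofReal (Real.exp (-δ)))
    {N T : ℕ} (hm : 0 < m) (hT : m * N ≤ T) (x : ℝ) :
    histMeasure ν (fun t h ↦ ask (transcript N m τ t h)) T
        {y | x ≤ mistakes ask (fun k ↦ decide (θ k < 0)) (transcript N m τ T y)}
      ≤ ENNReal.ofReal (2 ^ N * Real.exp (-(m * δ * x))) := by
  set P := histMeasure ν (fun t h ↦ ask (transcript N m τ t h)) T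
  set V : (Fin T → ℝ) → ℝ := fun y ↦
    batchPotential ask θ δ m (stateAfter (batchStep N m τ) ([], 0, 0) T y)
  set v : ℝ := (1 / 2) ^ N * Real.exp (m * δ * x)
  have hv : 0 < v := by positivity
  have hmean : ∫⁻ y, ENNReal.ofReal (V y) ∂P ≤ 1 := by
    refine (lintegral_stateAfter_le (measurable_batchStep N m τ)
      ((measurable_of_countable ask).comp measurable_fst)
      measurable_batchPotential.ennreal_ofReal
      (lintegral_batchPotential_batchStep_le hδ hν N) ([], 0, 0) T).trans_eq ?_
    norm_num [batchPotential, mistakes]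
  have hsub : {y | x ≤ mistakes ask (fun k ↦ decide (θ k < 0)) (transcript N m τ T y)}
      ⊆ {y | ENNReal.ofReal v ≤ ENNReal.ofReal (V y)} := by
    refine fun y hy ↦ ENNReal.ofReal_le_ofReal ?_
    obtain ⟨hlen, hstate⟩ := stateAfter_batchStep_eq hm hT τ y
    have hexp : Real.exp (m * δ * x) ≤ Real.exp
        (m * δ * mistakes ask (fun k ↦ decide (θ k < 0)) (transcript N m τ T y)) :=
      Real.exp_le_exp.2 (mul_le_mul_of_nonneg_left hy (by positivity))
    simp only [V, v, hstate, batchPotential, hlen, Nat.cast_zero, mul_zero, sub_zero,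
      Real.exp_zero, pow_succ]
    linarith [mul_le_mul_of_nonneg_left hexp (show (0 : ℝ) ≤ (1 / 2) ^ N by positivity)]
  calc P {y | x ≤ mistakes ask (fun k ↦ decide (θ k < 0)) (transcript N m τ T y)}
      ≤ P {y | ENNReal.ofReal v ≤ ENNReal.ofReal (V y)} := measure_mono hsub
    _ ≤ (∫⁻ y, ENNReal.ofReal (V y) ∂P) / ENNReal.ofReal v :=
        meas_ge_le_lintegral_div (measurable_batchPotential.comp (measurable_stateAfter
          (measurable_batchStep N m τ) _ T)).ennreal_ofReal.aemeasurable
          (ENNReal.ofReal_pos.2 hv).ne' ENNReal.ofReal_ne_top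
    _ ≤ 1 / ENNReal.ofReal v := by gcongr
    _ = ENNReal.ofReal (2 ^ N * Real.exp (-(m * δ * x))) := by
        rw [one_div, ← ENNReal.ofReal_inv_of_pos hv, mul_inv, ← Real.exp_neg, one_div, inv_pow,
          inv_inv]

end Potential

/-! ### Noisy binary search by multiplicative weights -/

section Weights

variable {ι : Type*} [Fintype ι]

/-- `c` is a median of the weights `w`: at most half of the total weight lies strictly on either
side of `c`. -/
def IsWeightedMedian [LinearOrder ι] (w : ι → ℝ) (c : ι) : Prop :=
  2 * ∑ h with h < c, w h ≤ ∑ h, w h ∧ 2 * ∑ h with c < h, w h ≤ ∑ h, w h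

lemma exists_isWeightedMedian [LinearOrder ι] [Nonempty ι] {w : ι → ℝ} (hw : ∀ h, 0 ≤ w h) :
    ∃ c, IsWeightedMedian w c := by
  let light : Finset ι := {c | 2 * ∑ h with h < c, w h ≤ ∑ h, w h}
  have hne : light.Nonempty := by
    refine ⟨univ.min' univ_nonempty, ?_⟩
    simp [light, (min'_le _ _ (mem_univ _)).not_gt, sum_nonneg fun h _ ↦ hw h]
  set c := light.max' hne
  refine ⟨c, (mem_filter.1 (light.max'_mem hne)).2, ?_⟩
  by_contra! hheavy
  let above : Finset ι := {h | c < h}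
  have habove : above.Nonempty := by
    by_contra! hempty
    have : 0 ≤ ∑ h, w h := sum_nonneg fun h _ ↦ hw h
    grind [sum_empty]
  set c' := above.min' habove
  have hlt : c < c' := (mem_filter.1 (above.min'_mem habove)).2
  have hbelow : ∑ h with h < c', w h = ∑ h with ¬ c < h, w h := by
    refine sum_congr (filter_congr fun h _ ↦ ⟨fun hh hch ↦ ?_, fun hh ↦ ?_⟩) fun _ _ ↦ rfl
    · exact hh.not_ge (above.min'_le h (by simpa [above] using hch))
    · exact (not_lt.1 hh).trans_lt hlt
  have hsplit := sum_filter_add_sum_filter_not univ (fun h ↦ c < h) w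
  have hmem : c' ∈ light := by
    simp only [light, mem_filter, mem_univ, true_and]
    linarith
  exact hlt.not_ge (light.le_max' c' hmem)

lemma IsWeightedMedian.eq_of_sum_erase_lt [LinearOrder ι] {w : ι → ℝ} {c k : ι}
    (hc : IsWeightedMedian w c) (hw : ∀ h, 0 ≤ w h) (hk : ∑ h ∈ univ.erase k, w h < w k) :
    c = k := by
  have htotal := add_sum_erase univ w (mem_univ k)
  by_contra hne
  rcases lt_or_gt_of_ne hne with hlt | hlt
  · have hle : w k ≤ ∑ h with c < h, w h :=
      single_le_sum (fun h _ ↦ hw h) (mem_filter.2 ⟨mem_univ k, hlt⟩)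
    linarith [hc.2]
  · have hle : w k ≤ ∑ h with h < c, w h :=
      single_le_sum (fun h _ ↦ hw h) (mem_filter.2 ⟨mem_univ k, hlt⟩)
    linarith [hc.1]

/-- The progress measure of the search for the hypothesis `k`, where the weight of a hypothesis
with penalty `n` is `(1 / 3) ^ n`: the competing weight, discounted by `2 / 3` for each penalty of
`k` itself, so that rounds with wrong answers make progress as well. -/
noncomputable def searchPotential [DecidableEq ι] (p : ι → ℕ) (k : ι) : ℝ :=
  (2 / 3) ^ p k * ∑ h ∈ univ.erase k, (1 / 3) ^ p h

lemma searchPotential_add_le [DecidableEq ι] (p e : ι → ℕ) (k : ι)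
    (hhalf : e k = 0 →
      ∑ h ∈ univ.erase k, (1 / 3 : ℝ) ^ p h ≤ 2 * ∑ h with e h ≠ 0, (1 / 3 : ℝ) ^ p h) :
    searchPotential (p + e) k ≤ 2 / 3 * searchPotential p k := by
  simp only [searchPotential, Pi.add_apply]
  rcases eq_or_ne (e k) 0 with hk | hk
  · have hdrop : ∑ h ∈ univ.erase k, (1 / 3 : ℝ) ^ (p h + e h) ≤ ∑ h ∈ univ.erase k,
        (1 / 3 : ℝ) ^ p h - 2 / 3 * ∑ h with e h ≠ 0, (1 / 3 : ℝ) ^ p h := by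
      have herase : univ.filter (e · ≠ 0) = (univ.erase k).filter (e · ≠ 0) := by grind
      rw [herase, sum_filter, mul_sum, ← sum_sub_distrib]
      refine sum_le_sum fun h _ ↦ ?_
      split_ifs with hh
      · have : (1 / 3 : ℝ) ^ e h ≤ 1 / 3 := pow_le_of_le_one (by norm_num) (by norm_num) hh
        rw [pow_add]
        nlinarith [pow_pos (show (0 : ℝ) < 1 / 3 by norm_num) (p h)]
      · simp [not_not.1 hh]
    rw [hk, add_zero, mul_left_comm]
    gcongr
    linarith [hhalf hk]
  · have hpow : (2 / 3 : ℝ) ^ e k ≤ 2 / 3 := pow_le_of_le_one (by norm_num) (by norm_num) hk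
    rw [pow_add, mul_comm ((2 / 3 : ℝ) ^ p k), mul_assoc]
    gcongr ?_ * (_ * ∑ h ∈ _, ?_) with h
    exact pow_le_pow_of_le_one (by norm_num) (by norm_num) (Nat.le_add_right _ _)

/-- The median of the weights `(1 / 3) ^ p h`. -/
noncomputable def weightedMedian [LinearOrder ι] [Nonempty ι] (p : ι → ℕ) : ι :=
  (exists_isWeightedMedian (w := fun h ↦ (1 / 3) ^ p h) fun _ ↦ by positivity).choose

lemma isWeightedMedian_weightedMedian [LinearOrder ι] [Nonempty ι] (p : ι → ℕ) :
    IsWeightedMedian (fun h ↦ (1 / 3) ^ p h) (weightedMedian p) :=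
  Exists.choose_spec _

end Weights

section Search

variable {K : ℕ}

/-- Whether arm `a` is below the threshold according to the hypothesis `h`, which states that
exactly the first `h` arms are. -/
def isBelow (h : Fin (K + 1)) (a : Fin K) : Bool := decide ((a : ℕ) < h)

lemma RelaxedMonotone.exists_isBelow {μ : Fin K → ℝ} {τ : ℝ} (hμ : RelaxedMonotone μ τ)
    (hne : ∀ k, μ k ≠ τ) : ∃ h, ∀ k, isBelow h k = decide (μ k < τ) := by
  obtain ⟨k₀, hk₀, hside⟩ := hμ
  refine ⟨⟨k₀, Nat.lt_succ_of_le hk₀⟩, fun k ↦ decide_eq_decide.2 ⟨fun hk ↦ ?_, fun hk ↦ ?_⟩⟩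
  · exact ((hside k).1 hk).lt_of_ne (hne k)
  · exact not_le.1 fun hle ↦ hk.not_ge ((hside k).2 hle)

variable [NeZero K]

/-- The last arm below the threshold under the hypothesis `c`; for `c = 0`, where there is none,
the truncated subtraction selects the first arm. -/
def lowerArm (c : Fin (K + 1)) : Fin K :=
  ⟨c - 1, by have := NeZero.pos K; omega⟩

/-- The first arm above the threshold under the hypothesis `c`; for `c = K`, where there is none,
the last arm. -/
def upperArm (c : Fin (K + 1)) : Fin K :=
  ⟨min c (K - 1), by have := NeZero.pos K; omega⟩

lemma sum_erase_le_two_mul_sum_refuted {w : Fin (K + 1) → ℝ} (hw : ∀ h, 0 ≤ w h)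
    {c : Fin (K + 1)} (hc : IsWeightedMedian w c) (k : Fin (K + 1)) :
    ∑ h ∈ univ.erase k, w h ≤
      2 * ∑ h with isBelow h (lowerArm c) ≠ isBelow k (lowerArm c)
        ∨ isBelow h (upperArm c) ≠ isBelow k (upperArm c), w h := by
  have hsub {p : Fin (K + 1) → Prop} [DecidablePred p]
      (hp : ∀ h, p h → isBelow h (lowerArm c) ≠ isBelow k (lowerArm c)
        ∨ isBelow h (upperArm c) ≠ isBelow k (upperArm c)) :
      ∑ h with p h, w h ≤ ∑ h with isBelow h (lowerArm c) ≠ isBelow k (lowerArm c)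
        ∨ isBelow h (upperArm c) ≠ isBelow k (upperArm c), w h :=
    sum_le_sum_of_subset_of_nonneg (monotone_filter_right univ fun h _ ↦ hp h) fun h _ _ ↦ hw h
  have hsplit (p : Fin (K + 1) → Prop) [DecidablePred p] :=
    sum_filter_add_sum_filter_not univ p w
  have htotal := add_sum_erase univ w (mem_univ k)
  simp only [isBelow, lowerArm, upperArm, ne_eq] at hsub ⊢
  rcases lt_trichotomy k c with hlt | rfl | hlt
  · have := hsub (p := fun h ↦ ¬ h < c) (by grind)
    linarith [hsplit (· < c), hc.1, hw k]
  · have := hsub (p := (· ≠ k)) (by grind)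
    rw [filter_ne'] at this
    linarith [sum_nonneg fun h (_ : h ∈ univ.erase k) ↦ hw h]
  · have := hsub (p := fun h ↦ ¬ c < h) (by grind)
    linarith [hsplit (c < ·), hc.2, hw k]

/-- The state of the noisy binary search for the number of arms below the threshold: the number of
answers contradicting each hypothesis, the median hypothesis at the start of the current round, and
whether the round is at its second question. -/
structure SearchState (K : ℕ) where
  penalty : Fin (K + 1) → ℕ
  center : Fin (K + 1)
  atUpper : Bool

lemma two_thirds_pow_mul_lt {K N p : ℕ} (hK : 0 < K) (hN : 7 * Real.log K ≤ N) (hp : 6 * p < N) :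
    (2 / 3 : ℝ) ^ N * K < (2 / 9) ^ p := by
  have hN' : (6 * p + 1 : ℝ) ≤ N := by exact_mod_cast hp
  rw [← Real.log_lt_log_iff (by positivity) (by positivity), Real.log_mul (by positivity)
    (by positivity), Real.log_pow, Real.log_pow, Real.log_div (by norm_num) (by norm_num),
    Real.log_div (by norm_num) (by norm_num), show (9 : ℝ) = 3 ^ 2 by norm_num, Real.log_pow]
  have hpenalty : p * (2 * Real.log 3 - Real.log 2) ≤ p * 1.51 :=
    mul_le_mul_of_nonneg_left (by linarith [Real.log_three_lt_d9, Real.log_two_gt_d9])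
      (Nat.cast_nonneg p)
  have hround : (N : ℝ) * 0.4 ≤ N * (Real.log 3 - Real.log 2) :=
    mul_le_mul_of_nonneg_left (by linarith [Real.log_three_gt_d9, Real.log_two_lt_d9])
      (Nat.cast_nonneg N)
  push_cast
  linarith

namespace SearchState

/-- The arm that the search asks about. -/
def arm (s : SearchState K) : Fin K :=
  if s.atUpper then upperArm s.center else lowerArm s.center

/-- The state of the search after an answer, where `true` means below the threshold. -/
noncomputable def next (s : SearchState K) (b : Bool) : SearchState K :=
  let p : Fin (K + 1) → ℕ := fun h ↦ s.penalty h + if b = isBelow h s.arm then 0 else 1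
  ⟨p, if s.atUpper then weightedMedian p else s.center, !s.atUpper⟩

/-- The state of the search after a transcript listed from the most recent answer. -/
noncomputable def run (l : List Bool) : SearchState K :=
  l.foldr (fun b s ↦ s.next b) ⟨0, weightedMedian 0, false⟩

lemma penalty_run (h : Fin (K + 1)) (l : List Bool) :
    (run l).penalty h = mistakes (fun l ↦ (run (K := K) l).arm) (isBelow h) l := by
  induction l with
  | nil => rfl
  | cons b l ih => rw [mistakes, ← ih]; rfl

lemma searchPotential_next_next_le {s : SearchState K} (hs : s.atUpper = false)
    (hc : s.center = weightedMedian s.penalty) (b b' : Bool) (k : Fin (K + 1)) :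
    searchPotential ((s.next b).next b').penalty k ≤ 2 / 3 * searchPotential s.penalty k := by
  have hpenalty : ((s.next b).next b').penalty = s.penalty + fun h ↦
      (if b = isBelow h (lowerArm s.center) then 0 else 1)
        + if b' = isBelow h (upperArm s.center) then 0 else 1 := by
    ext h
    simp [next, arm, hs, add_assoc]
  rw [hpenalty]
  refine searchPotential_add_le _ _ k fun hcorrect ↦ ?_
  obtain ⟨rfl, rfl⟩ : b = isBelow k (lowerArm s.center) ∧ b' = isBelow k (upperArm s.center) := by
    grind
  convert sum_erase_le_two_mul_sum_refuted (fun h ↦ by positivity)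
    (hc ▸ isWeightedMedian_weightedMedian s.penalty) k using 5
  grind

lemma run_of_length_eq_two_mul (k : Fin (K + 1)) (N : ℕ) (l : List Bool) (hl : l.length = 2 * N) :
    (run (K := K) l).atUpper = false
      ∧ (run (K := K) l).center = weightedMedian (run (K := K) l).penalty
      ∧ searchPotential (run l).penalty k ≤ (2 / 3) ^ N * K := by
  induction N generalizing l with
  | zero =>
    obtain rfl := List.length_eq_zero_iff.1 hl
    exact ⟨rfl, rfl, by simp [run, searchPotential]⟩
  | succ N ih =>
    obtain ⟨b', b, l, rfl⟩ : ∃ b' b l', l = b' :: b :: l' := by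
      match l with
      | b' :: b :: l' => exact ⟨b', b, l', rfl⟩
    obtain ⟨hfirst, hcenter, hpotential⟩ := ih l (by grind)
    refine ⟨?_, ?_, ?_⟩
    · simpa [run, next] using hfirst
    · have hsecond : ((run (K := K) l).next b).atUpper = true := by simp [next, hfirst]
      exact if_pos hsecond
    · calc searchPotential (run (b' :: b :: l)).penalty k
          ≤ 2 / 3 * searchPotential (run l).penalty k :=
            searchPotential_next_next_le hfirst hcenter b b' k
        _ ≤ 2 / 3 * ((2 / 3) ^ N * K) := by gcongr
        _ = (2 / 3) ^ (N + 1) * K := by ring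

lemma center_run_eq (k : Fin (K + 1)) {N : ℕ} (hN : 7 * Real.log K ≤ N) {l : List Bool}
    (hl : l.length = 2 * N)
    (hmistakes : 6 * mistakes (fun l ↦ (run (K := K) l).arm) (isBelow k) l < N) :
    (run l).center = k := by
  obtain ⟨-, hcenter, hpotential⟩ := run_of_length_eq_two_mul k N l hl
  rw [hcenter]
  refine (isWeightedMedian_weightedMedian _).eq_of_sum_erase_lt (fun h ↦ by positivity) ?_
  have hsmall : searchPotential (run l).penalty k < (2 / 9) ^ (run l).penalty k :=
    hpotential.trans_lt (two_thirds_pow_mul_lt (Nat.pos_of_neZero K) hN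
      (penalty_run k l ▸ hmistakes))
  rw [searchPotential, show (2 / 9 : ℝ) = 2 / 3 * (1 / 3) by norm_num, mul_pow] at hsmall
  exact lt_of_mul_lt_mul_left hsmall (by positivity)

end SearchState
end Search

/-! ### Choice of the parameters -/

lemma exists_schedule {K T : ℕ} (hK : 3 ≤ K) (hT : 36 * Real.log K < T) :
    ∃ N m : ℕ, 7 * Real.log K ≤ N ∧ N ≤ 8 * Real.log K ∧ 0 < m ∧ m * (2 * N) ≤ T
      ∧ T ≤ 4 * N * m := by
  have hlog : 1 ≤ Real.log K := by
    rw [Real.le_log_iff_exp_le (by positivity)]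
    exact Real.exp_one_lt_three.le.trans (by exact_mod_cast hK)
  have hfloor := Nat.floor_le (show 0 ≤ 8 * Real.log K by linarith)
  have hlt := Nat.lt_floor_add_one (8 * Real.log K)
  set N := ⌊8 * Real.log K⌋₊
  have hN : 0 < N := by
    have : (0 : ℝ) < N := by linarith
    exact_mod_cast this
  have hNT : 2 * N ≤ T := by
    have : (2 * N : ℝ) ≤ T := by linarith
    exact_mod_cast this
  have hm : 0 < T / (2 * N) := Nat.div_pos hNT (by positivity)
  refine ⟨N, T / (2 * N), by linarith, hfloor, hm, Nat.div_mul_le_self _ _, ?_⟩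
  have := Nat.lt_div_mul_add (a := T) (b := 2 * N) (by positivity)
  nlinarith

lemma two_pow_mul_exp_le {K N m T : ℕ} {δ : ℝ} (hδ : 0 ≤ δ) (hN : N ≤ 8 * Real.log K)
    (hT : T ≤ 4 * N * m) :
    2 ^ (2 * N) * Real.exp (-(m * δ * (N / 6)))
      ≤ Real.exp (-(1 / 24) * T * δ + 12 * Real.log K) := by
  have hT' : (T : ℝ) ≤ 4 * N * m := by exact_mod_cast hT
  rw [← Real.exp_log (show (0 : ℝ) < 2 ^ (2 * N) by positivity), ← Real.exp_add, Real.log_pow]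
  refine Real.exp_le_exp.2 ?_
  have hlog : (2 * N : ℕ) * Real.log 2 ≤ 12 * Real.log K := by
    push_cast
    nlinarith [Real.log_two_lt_d9]
  nlinarith [mul_le_mul_of_nonneg_right hT' hδ]

section Strategy

variable {K : ℕ} [NeZero K]

/-- The sampling rule of the noisy binary search with `2 * N` questions, each answered by a batch of
`m` observations. -/
noncomputable def searchPolicy (N m : ℕ) (τ : ℝ) (t : ℕ) (h : Fin t → ℝ) : Fin K :=
  (SearchState.run (transcript (2 * N) m τ t h)).arm

/-- The labels that the noisy binary search assigns to the arms, where `true` stands for a mean of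
at least `τ`. -/
noncomputable def searchLabels (N m : ℕ) (τ : ℝ) (T : ℕ) (y : Fin T → ℝ) (k : Fin K) : Bool :=
  !isBelow (SearchState.run (transcript (2 * N) m τ T y)).center k

lemma measurable_searchPolicy (N m : ℕ) (τ : ℝ) (t : ℕ) :
    Measurable (searchPolicy (K := K) N m τ t) :=
  (measurable_of_countable fun l ↦ (SearchState.run l).arm).comp (measurable_transcript _ m τ t)

lemma measurable_searchLabels (N m : ℕ) (τ : ℝ) (T : ℕ) :
    Measurable (searchLabels (K := K) N m τ T) :=
  (measurable_of_countable fun l (k : Fin K) ↦ !isBelow (SearchState.run l).center k).comp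
    (measurable_transcript _ m τ T)

variable {N m T : ℕ} {μ : Fin K → ℝ} {τ : ℝ}

lemma errSet_searchLabels_subset (hN : 7 * Real.log K ≤ N) (hm : 0 < m) (hT : m * (2 * N) ≤ T)
    (hμ : RelaxedMonotone μ τ) (hne : ∀ k, μ k ≠ τ) :
    errSet (searchLabels N m τ T) μ τ ⊆ {y | (N / 6 : ℝ) ≤ mistakes
      (fun l ↦ (SearchState.run (K := K) l).arm) (fun k ↦ decide (μ k < τ))
      (transcript (2 * N) m τ T y)} := by
  obtain ⟨k₀, hk₀⟩ := hμ.exists_isBelow hne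
  rintro y ⟨k, herror⟩
  by_contra! hfew
  rw [Set.mem_ofPred_eq, not_le, lt_div_iff₀' (by norm_num), ← funext hk₀] at hfew
  have hcenter := SearchState.center_run_eq k₀ hN (stateAfter_batchStep_eq hm hT τ y).1
    (by exact_mod_cast hfew)
  simp [searchLabels, hcenter, hk₀] at herror

lemma histMeasure_errSet_searchLabels_le {σ : ℝ} (hσ : σ ≠ 0) {ν : Fin K → Measure ℝ}
    [∀ k, IsProbabilityMeasure (ν k)] (hν : ∀ k, IsSubGaussianArm (σ ^ 2) (μ k) (ν k))
    (hμ : RelaxedMonotone μ τ) (hne : ∀ k, μ k ≠ τ)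
    (hN : 7 * Real.log K ≤ N) (hm : 0 < m) (hT : m * (2 * N) ≤ T) :
    histMeasure ν (searchPolicy N m τ) T (errSet (searchLabels N m τ T) μ τ) ≤ ENNReal.ofReal
      (2 ^ (2 * N) * Real.exp (-(m * ((⨅ k, |μ k - τ|) ^ 2 / (2 * σ ^ 2)) * (N / 6)))) := by
  have hbelow : (fun k ↦ decide (μ k < τ)) = fun k ↦ decide ((μ k - τ) / σ ^ 2 < 0) := by
    funext k
    rw [decide_eq_decide, div_lt_iff₀ (by positivity), zero_mul, sub_neg]
  refine (measure_mono (errSet_searchLabels_subset hN hm hT hμ hne)).trans ?_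
  rw [hbelow]
  have hδ : 0 ≤ (⨅ k, |μ k - τ|) ^ 2 / (2 * σ ^ 2) := by positivity
  refine histMeasure_mistakes_ge_le (ask := fun l ↦ (SearchState.run l).arm) hδ (fun k ↦ ?_) hm
    hT (N / 6)
  refine ((hν k).lintegral_exp_neg_div_mul_sub_le hσ τ).trans (ENNReal.ofReal_le_ofReal ?_)
  have hgap : ⨅ k, |μ k - τ| ≤ |μ k - τ| := ciInf_le (Set.finite_range _).bddBelow k
  have hgap_nonneg : 0 ≤ ⨅ k, |μ k - τ| := Real.iInf_nonneg fun k ↦ abs_nonneg _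
  rw [← sq_abs (μ k - τ)]
  gcongr

end Strategy

/-- Problem dependent upper bound for the relaxed monotone thresholding bandit problem
(Theorem 2 together with Remark 2): for `T > 36 log K` there is a fixed-budget strategy
(PD-MTB) whose probability of error on every sub-Gaussian bandit problem whose means
satisfy the relaxed monotonicity condition is at most
`exp(−(1/48)·T·Δ_min²/σ² + 12·log K)`. -/
theorem relaxed_monotone_upper_bound
    (K T : ℕ) (hK : 3 ≤ K) (hT : 36 * Real.log K < T) (τ : ℝ) :
    ∃ (π : (t : ℕ) → (Fin t → ℝ) → Fin K) (Qhat : (Fin T → ℝ) → Fin K → Bool),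
      (∀ t, Measurable (π t)) ∧ Measurable Qhat ∧
      ∀ (σ : ℝ), 0 < σ → ∀ (ν : Fin K → Measure ℝ) (μ : Fin K → ℝ),
        (∀ k, IsProbabilityMeasure (ν k)) →
        (∀ k, ∫ x, x ∂ν k = μ k) →
        (∀ k, IsSubGaussianArm (σ ^ 2) (μ k) (ν k)) →
        RelaxedMonotone μ τ →
        histMeasure ν π T (errSet Qhat μ τ) ≤
          ENNReal.ofReal (Real.exp (-(1 / 48 : ℝ) * T * (⨅ k, |μ k - τ|) ^ 2 / σ ^ 2
            + 12 * Real.log K)) := by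
  have : NeZero K := ⟨by lia⟩
  obtain ⟨N, m, hN, hN', hm, hmT, hTm⟩ := exists_schedule hK hT
  refine ⟨searchPolicy N m τ, searchLabels N m τ T, measurable_searchPolicy N m τ,
    measurable_searchLabels N m τ T, fun σ hσ ν μ hprob _ hν hμ ↦ ?_⟩
  by_cases hne : ∀ k, μ k ≠ τ
  · refine (histMeasure_errSet_searchLabels_le hσ.ne' hν hμ hne hN hm hmT).trans
      (ENNReal.ofReal_le_ofReal ((two_pow_mul_exp_le (by positivity) hN' hTm).trans_eq ?_))
    congr 2
    ring
  · obtain ⟨k, hk⟩ := not_forall_not.1 hne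
    have hgap : ⨅ k, |μ k - τ| = 0 :=
      le_antisymm (ciInf_le_of_le (Set.finite_range _).bddBelow k (by simp [hk]))
        (Real.iInf_nonneg fun k ↦ abs_nonneg _)
    have := isProbabilityMeasure_histMeasure (ν := ν) (measurable_searchPolicy N m τ) T
    refine prob_le_one.trans (ENNReal.one_le_ofReal.2 (Real.one_le_exp ?_))
    rw [hgap]
    simpa using Real.log_natCast_nonneg K
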